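/- (MacLaurin's theorem, planar version.) Let a > b > 0 and −b² < λ < 0. Let Ω = { x + iy : x²/a² + y²/b² ≤ 1 } and Ω_λ = { x + iy : x²/(a² + λ) + y²/(b² + λ) ≤ 1 } be confocal ellipses. Then for every z ∈ ℂ with z ∉ Ω, (1/(π√((a² + λ)(b² + λ)))) ∫_{Ω_λ} 1/(ζ − z) dA(ζ) = (1/(π a b)) ∫_Ω 1/(ζ − z) dA(ζ). -/

import Mathlib

open Complex MeasureTheory

/-!
The linear map `x + iy ↦ ax + iby` carries the unit disc onto the ellipse with semi-axes `a`, `b`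
and has constant Jacobian, so the mean over the ellipse of a function `f` is an integral over
`r ∈ [0, 1]` of means of `f` along the homothetic ellipses with semi-axes `ra`, `rb`. With
`p = (a + b) / 2` and `q = (a - b) / 2`, the boundary ellipse is the image of the unit circle under
the Joukowski map `J w = pw + q/w`, and a smaller confocal ellipse is the image under the same `J`
of a circle of radius `t = (a' + b') / (a + b) ≤ 1`. Since `J` maps the annulus `t ≤ ‖w‖ ≤ 1` into
the larger ellipse, Cauchy's theorem for `f ∘ J` on this annulus shows that, for holomorphic `f`,
the two boundary means agree.
-/

open Metric Set
open Real (circleAverage)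
open scoped Real

/-- The closed region bounded by the ellipse with foci on a coordinate axis, centre `0` and
semi-axes `a` (real direction) and `b` (imaginary direction). -/
def closedEllipse (a b : ℝ) : Set ℂ := {p | p.re ^ 2 / a ^ 2 + p.im ^ 2 / b ^ 2 ≤ 1}

/-- The real-linear map `x + iy ↦ ax + iby`, which carries the unit disc onto
`closedEllipse a b`. -/
noncomputable def axisScaling (a b : ℝ) : ℂ →L[ℝ] ℂ :=
  reCLM.smulRight (a : ℂ) + imCLM.smulRight (b * I)

/-- The Joukowski map `w ↦ pw + q/w`, which carries circles centred at `0` to confocal ellipses. -/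
noncomputable def joukowski (p q : ℝ) (w : ℂ) : ℂ := p * w + q / w

section MeanValues

variable {E : Type*} [NormedAddCommGroup E] {a b a' b' p q r t : ℝ} {w : ℂ} {f : ℂ → E}

section Ellipse

lemma closedEllipse_subset_closedEllipse (ha' : 0 < a') (hb' : 0 < b') (ha : a' ≤ a)
    (hb : b' ≤ b) : closedEllipse a' b' ⊆ closedEllipse a b := fun p hp ↦
  calc p.re ^ 2 / a ^ 2 + p.im ^ 2 / b ^ 2 ≤ p.re ^ 2 / a' ^ 2 + p.im ^ 2 / b' ^ 2 := by gcongr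
    _ ≤ 1 := hp

lemma ofReal_mul_mem_interior_closedEllipse (hr : |r| < 1) (hw : w ∈ closedEllipse a b) :
    r * w ∈ interior (closedEllipse a b) := by
  have hopen : IsOpen {p : ℂ | p.re ^ 2 / a ^ 2 + p.im ^ 2 / b ^ 2 < 1} :=
    isOpen_lt (by fun_prop) continuous_const
  refine interior_maximal (ofPred_subset_ofPred.mpr fun _ ↦ le_of_lt) hopen ?_
  calc (r * w).re ^ 2 / a ^ 2 + (r * w).im ^ 2 / b ^ 2
      = r ^ 2 * (w.re ^ 2 / a ^ 2 + w.im ^ 2 / b ^ 2) := by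
        rw [re_ofReal_mul, im_ofReal_mul]; ring
    _ ≤ r ^ 2 * 1 := by gcongr; exact hw
    _ < 1 := by rwa [mul_one, sq_lt_one_iff_abs_lt_one]

lemma le_iff_le_of_confocal (ha : 0 < a) (hb : 0 < b) (ha' : 0 < a') (hb' : 0 < b')
    (hconf : a' ^ 2 - b' ^ 2 = a ^ 2 - b ^ 2) : a' ≤ a ↔ b' ≤ b := by
  rw [← sq_le_sq₀ ha'.le ha.le, ← sq_le_sq₀ hb'.le hb.le]
  constructor <;> intro h <;> linarith

lemma le_of_confocal_of_add_le_add (ha : 0 < a) (hb : 0 < b) (ha' : 0 < a') (hb' : 0 < b')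
    (hconf : a' ^ 2 - b' ^ 2 = a ^ 2 - b ^ 2) (hadd : a' + b' ≤ a + b) : a' ≤ a := by
  by_contra! hlt
  have hle : b ≤ b' := (le_iff_le_of_confocal ha' hb' ha hb hconf.symm).mp hlt.le
  linarith

lemma axisScaling_re : (axisScaling a b w).re = a * w.re := by
  simp [axisScaling, mul_comm]

lemma axisScaling_im : (axisScaling a b w).im = b * w.im := by
  simp [axisScaling, mul_comm]

lemma axisScaling_ofReal_mul : axisScaling a b (r * w) = r * axisScaling a b w := by
  simp only [← real_smul, map_smul]

lemma axisScaling_injective (ha : a ≠ 0) (hb : b ≠ 0) :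
    Function.Injective (axisScaling a b) := fun v w h ↦ by
  have hre := congrArg re h
  have him := congrArg im h
  simp only [axisScaling_re, axisScaling_im] at hre him
  exact Complex.ext (mul_left_cancel₀ ha hre) (mul_left_cancel₀ hb him)

lemma axisScaling_mem_closedEllipse_iff (ha : a ≠ 0) (hb : b ≠ 0) :
    axisScaling a b w ∈ closedEllipse a b ↔ ‖w‖ ≤ 1 := by
  have hnorm : (a * w.re) ^ 2 / a ^ 2 + (b * w.im) ^ 2 / b ^ 2 = ‖w‖ ^ 2 := by
    rw [Complex.sq_norm, normSq_apply]; field_simp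
  rw [closedEllipse, Set.mem_ofPred_eq, axisScaling_re, axisScaling_im, hnorm,
    sq_le_one_iff₀ (norm_nonneg w)]

lemma image_axisScaling_closedBall (ha : a ≠ 0) (hb : b ≠ 0) :
    axisScaling a b '' closedBall 0 1 = closedEllipse a b := by
  have hsurj : Function.Surjective (axisScaling a b) := fun w ↦
    ⟨⟨w.re / a, w.im / b⟩, Complex.ext (by simp [axisScaling_re, ha, mul_div_cancel₀])
      (by simp [axisScaling_im, hb, mul_div_cancel₀])⟩
  rw [← image_preimage_eq (closedEllipse a b) hsurj]
  congr 1
  ext w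
  rw [mem_closedBall_zero_iff, mem_preimage, axisScaling_mem_closedEllipse_iff ha hb]

lemma det_axisScaling : (axisScaling a b).det = a * b := by
  rw [ContinuousLinearMap.det, ← LinearMap.det_toMatrix basisOneI, Matrix.det_fin_two]
  simp [LinearMap.toMatrix_apply, axisScaling]

lemma setIntegral_closedEllipse [NormedSpace ℝ E] (ha : a ≠ 0) (hb : b ≠ 0) (f : ℂ → E) :
    ∫ ζ in closedEllipse a b, f ζ =
      |a * b| • ∫ w in closedBall 0 1, f (axisScaling a b w) := by
  rw [← image_axisScaling_closedBall ha hb,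
    integral_image_eq_integral_abs_det_fderiv_smul volume measurableSet_closedBall
      (fun w _ ↦ (axisScaling a b).hasFDerivWithinAt) (axisScaling_injective ha hb).injOn,
    det_axisScaling, integral_smul]

end Ellipse

section PolarCoordinates

variable [NormedSpace ℝ E]

lemma setIntegral_Ioo_circleMap (f : ℂ → E) (c : ℂ) (R : ℝ) :
    ∫ θ in Ioo (-π) π, f (circleMap c R θ) = (2 * π) • circleAverage f c R := by
  have hper : Function.Periodic (fun θ ↦ f (circleMap c R θ)) (2 * π) :=
    (periodic_circleMap c R).comp f
  rw [Real.circleAverage_def, smul_inv_smul₀ Real.two_pi_pos.ne', ← integral_Ioc_eq_integral_Ioo,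
    ← intervalIntegral.integral_of_le (by linarith [Real.pi_pos])]
  convert hper.intervalIntegral_add_eq (-π) 0 using 2 <;> ring

lemma setIntegral_closedBall_eq_setIntegral_prod (f : ℂ → E) (R : ℝ) :
    ∫ w in closedBall 0 R, f w =
      ∫ x in Ioc 0 R ×ˢ Ioo (-π) π, x.1 • f (circleMap 0 x.1 x.2) := by
  have hsymm (x : ℝ × ℝ) : Complex.polarCoord.symm x = circleMap 0 x.1 x.2 := by
    rw [Complex.polarCoord_symm_apply, circleMap_zero, exp_mul_I, ofReal_cos, ofReal_sin]
  have hsub : Ioc 0 R ×ˢ Ioo (-π) π ⊆ polarCoord.target :=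
    prod_mono Ioc_subset_Ioi_self subset_rfl
  rw [← integral_indicator measurableSet_closedBall, ← Complex.integral_comp_polarCoord_symm,
    ← inter_eq_self_of_subset_right hsub,
    ← setIntegral_indicator (measurableSet_Ioc.prod measurableSet_Ioo)]
  refine setIntegral_congr_fun polarCoord.open_target.measurableSet fun x hx ↦ ?_
  have hmem : circleMap 0 x.1 x.2 ∈ closedBall 0 R ↔ x ∈ Ioc 0 R ×ˢ Ioo (-π) π := by
    rw [mem_closedBall_zero_iff, norm_circleMap_zero, abs_of_pos hx.1]
    exact ⟨fun h ↦ ⟨⟨hx.1, h⟩, hx.2⟩, fun h ↦ h.1.2⟩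
  simp only [hsymm, indicator, hmem, smul_ite, smul_zero]

lemma setIntegral_closedBall_eq_integral_circleAverage {R : ℝ} (hR : 0 ≤ R)
    (hf : ContinuousOn f (closedBall 0 R)) :
    ∫ w in closedBall 0 R, f w = ∫ r in 0..R, (2 * π * r) • circleAverage f 0 r := by
  have hcont : ContinuousOn (fun x : ℝ × ℝ ↦ x.1 • f (circleMap 0 x.1 x.2))
      (Icc 0 R ×ˢ Icc (-π) π) := by
    refine continuousOn_fst.smul (hf.comp Real.circleMap.continuous.continuousOn fun x hx ↦ ?_)
    rw [mem_closedBall_zero_iff, norm_circleMap_zero, abs_of_nonneg hx.1.1]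
    exact hx.1.2
  have hint : IntegrableOn (fun x : ℝ × ℝ ↦ x.1 • f (circleMap 0 x.1 x.2))
      (Ioc 0 R ×ˢ Ioo (-π) π) :=
    (hcont.integrableOn_compact (isCompact_Icc.prod isCompact_Icc)).mono_set
      (prod_mono Ioc_subset_Icc_self Ioo_subset_Icc_self)
  rw [setIntegral_closedBall_eq_setIntegral_prod, Measure.volume_eq_prod,
    setIntegral_prod _ hint, intervalIntegral.integral_of_le hR]
  refine setIntegral_congr_fun measurableSet_Ioc fun r _ ↦ ?_
  rw [integral_smul, setIntegral_Ioo_circleMap, smul_smul, mul_comm]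

end PolarCoordinates

section Joukowski

lemma joukowski_ofReal_mul (p q t : ℝ) (w : ℂ) :
    joukowski p q (t * w) = joukowski (p * t) (q / t) w := by
  simp only [joukowski]
  push_cast
  ring

lemma joukowski_eq_axisScaling (hw : ‖w‖ = 1) :
    joukowski p q w = axisScaling (p + q) (p - q) w := by
  rw [joukowski, div_eq_mul_inv, inv_eq_conj hw]
  apply Complex.ext
  · simp only [axisScaling_re, add_re, mul_re, ofReal_re, ofReal_im, conj_re, conj_im]
    ring
  · simp only [axisScaling_im, add_im, mul_im, ofReal_re, ofReal_im, conj_re, conj_im]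
    ring

lemma joukowski_mem_closedEllipse (hadd : p * ‖w‖ + q / ‖w‖ ≠ 0)
    (hsub : p * ‖w‖ - q / ‖w‖ ≠ 0) :
    joukowski p q w ∈ closedEllipse (p * ‖w‖ + q / ‖w‖) (p * ‖w‖ - q / ‖w‖) := by
  have hw : w ≠ 0 := by rintro rfl; simp at hadd
  have hunit : ‖w / ‖w‖‖ = 1 := by simp [hw]
  have hmem := (axisScaling_mem_closedEllipse_iff hadd hsub).mpr hunit.le
  rwa [← joukowski_eq_axisScaling hunit, ← joukowski_ofReal_mul,
    mul_div_cancel₀ w (ofReal_ne_zero.mpr (norm_ne_zero_iff.mpr hw))] at hmem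

lemma abs_lt_mul_sq_iff (ht : 0 < t) :
    |q| < p * t ^ 2 ↔ 0 < p * t + q / t ∧ 0 < p * t - q / t := by
  have hadd : (p * t + q / t) * t = p * t ^ 2 + q := by field_simp
  have hsub : (p * t - q / t) * t = p * t ^ 2 - q := by field_simp
  rw [abs_lt, neg_lt_iff_pos_add', ← sub_pos (b := q), ← hadd, ← hsub,
    mul_pos_iff_of_pos_right ht, mul_pos_iff_of_pos_right ht]

lemma mapsTo_joukowski_closedEllipse (ht : 0 < t) (hq : |q| < p * t ^ 2) :
    MapsTo (joukowski p q) (closedBall 0 1 \ ball 0 t) (closedEllipse (p + q) (p - q)) := by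
  rintro w ⟨hw1, hwt⟩
  rw [mem_closedBall_zero_iff] at hw1
  rw [mem_ball_zero_iff, not_lt] at hwt
  have hw : 0 < ‖w‖ := ht.trans_le hwt
  have hp : 0 < p := pos_of_mul_pos_left ((abs_nonneg q).trans_lt hq) (sq_nonneg t)
  have hqw : |q| < p * ‖w‖ ^ 2 := hq.trans_le (by gcongr)
  have hq1 : |q| < p * 1 ^ 2 := hqw.trans_le (by gcongr)
  obtain ⟨hA, hB⟩ := (abs_lt_mul_sq_iff hw).mp hqw
  obtain ⟨ha, hb⟩ := (abs_lt_mul_sq_iff one_pos).mp hq1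
  rw [mul_one, div_one] at ha hb
  have hconf : (p * ‖w‖ + q / ‖w‖) ^ 2 - (p * ‖w‖ - q / ‖w‖) ^ 2 = (p + q) ^ 2 - (p - q) ^ 2 := by
    field_simp
    ring
  have hadd : p * ‖w‖ + q / ‖w‖ + (p * ‖w‖ - q / ‖w‖) ≤ p + q + (p - q) := by
    linarith [mul_le_of_le_one_right hp.le hw1]
  have hAa := le_of_confocal_of_add_le_add ha hb hA hB hconf hadd
  have hBb := (le_iff_le_of_confocal ha hb hA hB hconf).mp hAa
  exact closedEllipse_subset_closedEllipse hA hB hAa hBb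
    (joukowski_mem_closedEllipse hA.ne' hB.ne')

end Joukowski

section Holomorphic

variable [NormedSpace ℂ E]

lemma circleAverage_eq_of_differentiableOn_annulus {c : ℂ} {R : ℝ} (hr : 0 < r) (hrR : r ≤ R)
    (hc : ContinuousOn f (closedBall c R \ ball c r))
    (hd : DifferentiableOn ℂ f (ball c R \ closedBall c r)) :
    circleAverage f c R = circleAverage f c r := by
  have hopen : IsOpen (ball c R \ closedBall c r) := isOpen_ball.sdiff isClosed_closedBall
  rw [Real.circleAverage_eq_circleIntegral (hr.trans_le hrR).ne',
    Real.circleAverage_eq_circleIntegral hr.ne',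
    circleIntegral_sub_center_inv_smul_eq_of_differentiable_on_annulus_off_countable hr hrR
      countable_empty hc fun z hz ↦ hd.differentiableAt (hopen.mem_nhds hz.1)]

lemma circleAverage_comp_joukowski_eq_of_le_one (ht : 0 < t) (ht1 : t ≤ 1)
    (hq : |q| < p * t ^ 2) (hf : DifferentiableOn ℂ f (closedEllipse (p + q) (p - q))) :
    circleAverage (f ∘ joukowski p q) 0 1 = circleAverage (f ∘ joukowski p q) 0 t := by
  have hJ : DifferentiableOn ℂ (joukowski p q) (closedBall 0 1 \ ball 0 t) := fun w hw ↦ by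
    have hw0 : w ≠ 0 := by rintro rfl; exact hw.2 (mem_ball_self ht)
    have hw' : DifferentiableAt ℂ (joukowski p q) w := by
      unfold joukowski
      fun_prop (disch := assumption)
    exact hw'.differentiableWithinAt
  have hfJ := hf.comp hJ (mapsTo_joukowski_closedEllipse ht hq)
  exact circleAverage_eq_of_differentiableOn_annulus ht ht1 hfJ.continuousOn
    (hfJ.mono (sdiff_subset_sdiff ball_subset_closedBall ball_subset_closedBall))

lemma circleAverage_comp_joukowski_eq_axisScaling :
    circleAverage (f ∘ joukowski p q) 0 1 =
      circleAverage (f ∘ axisScaling (p + q) (p - q)) 0 1 :=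
  Real.circleAverage_congr_sphere fun w hw ↦ by
    rw [abs_one, mem_sphere_zero_iff_norm] at hw
    simp only [Function.comp_apply, joukowski_eq_axisScaling hw]

lemma circleAverage_comp_axisScaling_eq_of_confocal (hb : 0 < b) (ha' : 0 < a') (hb' : 0 < b')
    (ha : a' ≤ a) (hconf : a' ^ 2 - b' ^ 2 = a ^ 2 - b ^ 2)
    (hf : DifferentiableOn ℂ f (closedEllipse a b)) :
    circleAverage (f ∘ axisScaling a' b') 0 1 = circleAverage (f ∘ axisScaling a b) 0 1 := by
  obtain ⟨p, q, rfl, rfl⟩ : ∃ p q : ℝ, p + q = a ∧ p - q = b :=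
    ⟨(a + b) / 2, (a - b) / 2, by ring, by ring⟩
  have hp : 0 < p := by linarith
  obtain ⟨t, hpt⟩ : ∃ t, p * t = (a' + b') / 2 := ⟨(a' + b') / 2 / p, mul_div_cancel₀ _ hp.ne'⟩
  have ht : 0 < t := by rw [← mul_pos_iff_of_pos_left hp, hpt]; positivity
  have hbb : b' ≤ p - q := (le_iff_le_of_confocal (ha'.trans_le ha) hb ha' hb' hconf).mp ha
  have ht1 : t ≤ 1 := by rw [← mul_le_iff_le_one_right hp]; linarith
  have hqt : q / t = (a' - b') / 2 := by
    rw [div_eq_iff ht.ne', ← mul_right_inj' hp.ne']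
    linear_combination (-1 / 4 : ℝ) * hconf - (a' - b') / 2 * hpt
  have hadd : p * t + q / t = a' := by linarith
  have hsub : p * t - q / t = b' := by linarith
  have hq : |q| < p * t ^ 2 := (abs_lt_mul_sq_iff ht).mpr ⟨hadd ▸ ha', hsub ▸ hb'⟩
  calc circleAverage (f ∘ axisScaling a' b') 0 1
      = circleAverage (f ∘ joukowski (p * t) (q / t)) 0 1 := by
        rw [circleAverage_comp_joukowski_eq_axisScaling, hadd, hsub]
    _ = circleAverage (f ∘ joukowski p q) 0 t := by
        rw [Real.circleAverage_eq_circleAverage_zero_one (R := t)]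
        simp only [add_zero, Function.comp_def, joukowski_ofReal_mul]
    _ = circleAverage (f ∘ joukowski p q) 0 1 :=
        (circleAverage_comp_joukowski_eq_of_le_one ht ht1 hq hf).symm
    _ = circleAverage (f ∘ axisScaling (p + q) (p - q)) 0 1 :=
        circleAverage_comp_joukowski_eq_axisScaling

lemma circleAverage_comp_axisScaling_eq_of_abs_lt_one (hb : 0 < b) (ha' : 0 < a') (hb' : 0 < b')
    (ha : a' ≤ a) (hconf : a' ^ 2 - b' ^ 2 = a ^ 2 - b ^ 2) (hr : |r| < 1)
    (hf : DifferentiableOn ℂ f (interior (closedEllipse a b))) :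
    circleAverage (f ∘ axisScaling a' b') 0 r = circleAverage (f ∘ axisScaling a b) 0 r := by
  have hfr : DifferentiableOn ℂ (fun ζ ↦ f (r * ζ)) (closedEllipse a b) :=
    hf.comp (by fun_prop) fun ζ hζ ↦ ofReal_mul_mem_interior_closedEllipse hr hζ
  rw [Real.circleAverage_eq_circleAverage_zero_one (R := r),
    Real.circleAverage_eq_circleAverage_zero_one (R := r)]
  simp only [add_zero, Function.comp_apply, axisScaling_ofReal_mul]
  exact circleAverage_comp_axisScaling_eq_of_confocal hb ha' hb' ha hconf hfr

lemma smul_setIntegral_closedEllipse_eq_integral_circleAverage (ha : 0 < a) (hb : 0 < b)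
    (hf : ContinuousOn f (closedEllipse a b)) :
    (π * a * b)⁻¹ • ∫ ζ in closedEllipse a b, f ζ =
      ∫ r in 0..1, (2 * r) • circleAverage (f ∘ axisScaling a b) 0 r := by
  have hcont : ContinuousOn (f ∘ axisScaling a b) (closedBall 0 1) := by
    rw [← image_axisScaling_closedBall ha.ne' hb.ne'] at hf
    exact hf.comp (axisScaling a b).continuous.continuousOn (mapsTo_image _ _)
  have hpolar := setIntegral_closedBall_eq_integral_circleAverage zero_le_one hcont
  simp only [Function.comp_apply] at hpolar
  rw [setIntegral_closedEllipse ha.ne' hb.ne', hpolar, abs_of_pos (mul_pos ha hb), smul_smul,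
    ← intervalIntegral.integral_smul]
  congr 1 with r
  rw [smul_smul]
  congr 1
  field [Real.pi_ne_zero]

theorem smul_setIntegral_closedEllipse_eq_of_confocal (hb : 0 < b) (ha' : 0 < a') (hb' : 0 < b')
    (ha : a' ≤ a) (hconf : a' ^ 2 - b' ^ 2 = a ^ 2 - b ^ 2)
    (hc : ContinuousOn f (closedEllipse a b))
    (hd : DifferentiableOn ℂ f (interior (closedEllipse a b))) :
    (π * a' * b')⁻¹ • ∫ ζ in closedEllipse a' b', f ζ =
      (π * a * b)⁻¹ • ∫ ζ in closedEllipse a b, f ζ := by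
  have ha0 : 0 < a := ha'.trans_le ha
  have hbb : b' ≤ b := (le_iff_le_of_confocal ha0 hb ha' hb' hconf).mp ha
  rw [smul_setIntegral_closedEllipse_eq_integral_circleAverage ha' hb'
      (hc.mono (closedEllipse_subset_closedEllipse ha' hb' ha hbb)),
    smul_setIntegral_closedEllipse_eq_integral_circleAverage ha0 hb hc]
  refine intervalIntegral.integral_congr_Ioo_of_le zero_le_one fun r hr ↦ ?_
  have hr1 : |r| < 1 := abs_lt.mpr ⟨by linarith [hr.1], hr.2⟩
  simp only [circleAverage_comp_axisScaling_eq_of_abs_lt_one hb ha' hb' ha hconf hr1 hd]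

end Holomorphic

end MeanValues

theorem maclaurin_confocal_ellipses_general {E : Type*} [NormedAddCommGroup E] [NormedSpace ℂ E]
    {a b lam : ℝ} (ha : 0 < a) (hb : 0 < b) (halam : -a ^ 2 < lam) (hblam : -b ^ 2 < lam)
    (hlam : lam ≤ 0) {f : ℂ → E}
    (hc : ContinuousOn f {p : ℂ | p.re ^ 2 / a ^ 2 + p.im ^ 2 / b ^ 2 ≤ 1})
    (hd : DifferentiableOn ℂ f (interior {p : ℂ | p.re ^ 2 / a ^ 2 + p.im ^ 2 / b ^ 2 ≤ 1})) :
    (π * √((a ^ 2 + lam) * (b ^ 2 + lam)))⁻¹ •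
        ∫ ζ in {p : ℂ | p.re ^ 2 / (a ^ 2 + lam) + p.im ^ 2 / (b ^ 2 + lam) ≤ 1}, f ζ =
      (π * a * b)⁻¹ • ∫ ζ in {p : ℂ | p.re ^ 2 / a ^ 2 + p.im ^ 2 / b ^ 2 ≤ 1}, f ζ := by
  have hA : 0 < a ^ 2 + lam := by linarith
  have hB : 0 < b ^ 2 + lam := by linarith
  have hAa : √(a ^ 2 + lam) ≤ a := Real.sqrt_le_iff.mpr ⟨ha.le, by linarith⟩
  have hconf : √(a ^ 2 + lam) ^ 2 - √(b ^ 2 + lam) ^ 2 = a ^ 2 - b ^ 2 := by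
    rw [Real.sq_sqrt hA.le, Real.sq_sqrt hB.le]
    ring
  have h := smul_setIntegral_closedEllipse_eq_of_confocal hb (Real.sqrt_pos.mpr hA)
    (Real.sqrt_pos.mpr hB) hAa hconf hc hd
  rwa [closedEllipse, Real.sq_sqrt hA.le, Real.sq_sqrt hB.le, mul_assoc,
    ← Real.sqrt_mul hA.le] at h

lemma differentiableOn_inv_sub {s : Set ℂ} {z : ℂ} (hz : z ∉ s) :
    DifferentiableOn ℂ (fun ζ ↦ (ζ - z)⁻¹) s :=
  (differentiableOn_id.sub_const z).inv fun _ hζ ↦ sub_ne_zero.mpr (ne_of_mem_of_not_mem hζ hz)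

/-- MacLaurin's theorem (planar version): the normalized Cauchy potentials of two
confocal ellipses agree outside the larger one. -/
theorem maclaurin_confocal_ellipses
    (a b lam : ℝ) (hb : 0 < b) (hab : b < a) (hlam1 : -b ^ 2 < lam) (hlam2 : lam < 0)
    (Ω : Set ℂ) (hΩ : Ω = {p : ℂ | p.re ^ 2 / a ^ 2 + p.im ^ 2 / b ^ 2 ≤ 1})
    (Ωlam : Set ℂ)
    (hΩlam : Ωlam = {p : ℂ | p.re ^ 2 / (a ^ 2 + lam) + p.im ^ 2 / (b ^ 2 + lam) ≤ 1})
    (z : ℂ) (hz : z ∉ Ω) :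
    ((Real.pi * Real.sqrt ((a ^ 2 + lam) * (b ^ 2 + lam)) : ℝ) : ℂ)⁻¹ *
        (∫ ζ in Ωlam, (ζ - z)⁻¹)
      = ((Real.pi * a * b : ℝ) : ℂ)⁻¹ * (∫ ζ in Ω, (ζ - z)⁻¹) := by
  subst hΩ hΩlam
  have hf := differentiableOn_inv_sub hz
  simpa only [real_smul, ofReal_inv] using maclaurin_confocal_ellipses_general (hb.trans hab) hb
    (by nlinarith) hlam1 hlam2.le hf.continuousOn (hf.mono interior_subset)
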